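/- Let R > 0 and 3R/2 ≤ s < t ≤ 2R, let v : ℝ³ → ℝ³ be a smooth vector field and θ : ℝ³ → ℝ a smooth function, and set J₆ = (1/(t−s)) ∫_{B_t ∖ B_s} |v||θ| dx. Let q ∈ [1, 2) and r ∈ [1, 2). Then J₆ ≤ (1/(t−s)) ‖v‖_{L^q(B_t ∖ B_R)}^{2q/(6−q)} ‖θ‖_{L^r(B_t ∖ B_R)}^{2r/(6−r)} ‖v‖_{L⁶(B_t ∖ B_R)}^{3(2−q)/(6−q)} ‖θ‖_{L⁶(B_t ∖ B_R)}^{3(2−r)/(6−r)}. -/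

import Mathlib

open MeasureTheory Filter Metric

noncomputable section

/-- `L^p` norm of a scalar function on a set `E ⊆ ℝ³`. -/
def lpS (g : EuclideanSpace ℝ (Fin 3) → ℝ) (p : ℝ) (E : Set (EuclideanSpace ℝ (Fin 3))) : ℝ :=
  (∫ x in E, |g x| ^ p) ^ (1 / p)

theorem aux_memLp (g : EuclideanSpace ℝ (Fin 3) → ℝ) (hg : Continuous g) (t R : ℝ)
    (p : ENNReal) :
    MemLp g p (volume.restrict (ball (0 : EuclideanSpace ℝ (Fin 3)) t \ ball 0 R)) := by
  obtain ⟨C, hC⟩ := (isCompact_closedBall (0 : EuclideanSpace ℝ (Fin 3)) t).exists_bound_of_continuousOn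
    hg.continuousOn
  have : IsFiniteMeasure (volume.restrict (ball (0 : EuclideanSpace ℝ (Fin 3)) t \ ball 0 R)) := by
    refine isFiniteMeasure_restrict.mpr ?_
    exact ((measure_mono Set.diff_subset).trans_lt measure_ball_lt_top).ne
  refine MemLp.of_bound hg.aestronglyMeasurable C ?_
  refine (ae_restrict_iff' (measurableSet_ball.diff measurableSet_ball)).mpr ?_
  exact Filter.Eventually.of_forall fun x hx => hC x (ball_subset_closedBall hx.1)

theorem aux_interp (g : EuclideanSpace ℝ (Fin 3) → ℝ) (hg : Continuous g) (t R q : ℝ)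
    (hq1 : 1 ≤ q) (hq2 : q < 2) :
    lpS g 2 (ball 0 t \ ball 0 R) ≤ lpS g q (ball 0 t \ ball 0 R) ^ (2 * q / (6 - q)) *
      lpS g 6 (ball 0 t \ ball 0 R) ^ (3 * (2 - q) / (6 - q)) := by
  have h6 : 0 < 6 - q := by linarith
  have h2 : 0 < 2 - q := by linarith
  have hq : 0 < q := by linarith
  have hpq : ((6 - q) / 4).HolderConjugate ((6 - q) / (2 - q)) := by
    rw [Real.holderConjugate_iff]
    refine ⟨by linarith, ?_⟩
    field_simp
    ring
  have hc (a : ℝ) (ha : 0 ≤ a) : Continuous fun x => |g x| ^ a :=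
    hg.abs.rpow_const fun x => Or.inr ha
  have ha : 0 ≤ q * (4 / (6 - q)) := by positivity
  have hb : 0 ≤ 6 * ((2 - q) / (6 - q)) := by positivity
  have key := integral_mul_le_Lp_mul_Lq_of_nonneg hpq
    (μ := volume.restrict (ball (0 : EuclideanSpace ℝ (Fin 3)) t \ ball 0 R))
    (f := fun x => |g x| ^ (q * (4 / (6 - q)))) (g := fun x => |g x| ^ (6 * ((2 - q) / (6 - q))))
    (Filter.Eventually.of_forall fun x => by positivity)
    (Filter.Eventually.of_forall fun x => by positivity)
    (aux_memLp _ (hc _ ha) _ _ _) (aux_memLp _ (hc _ hb) _ _ _)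
  have e1 (x) : |g x| ^ (q * (4 / (6 - q))) * |g x| ^ (6 * ((2 - q) / (6 - q))) = |g x| ^ (2:ℝ) := by
    rw [← Real.rpow_add_of_nonneg (abs_nonneg _) ha hb]
    congr 1
    field_simp
    ring
  have e2 (x) : (|g x| ^ (q * (4 / (6 - q)))) ^ ((6 - q) / 4) = |g x| ^ q := by
    rw [← Real.rpow_mul (abs_nonneg _)]
    congr 1
    field_simp
  have e3 (x) : (|g x| ^ (6 * ((2 - q) / (6 - q)))) ^ ((6 - q) / (2 - q)) = |g x| ^ (6:ℝ) := by
    rw [← Real.rpow_mul (abs_nonneg _)]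
    congr 1
    field_simp
  simp only [e1, e2, e3] at key
  have n (a : ℝ) : 0 ≤ ∫ x in ball (0 : EuclideanSpace ℝ (Fin 3)) t \ ball 0 R, |g x| ^ a :=
    integral_nonneg fun x => by positivity
  have key2 := Real.rpow_le_rpow (n 2) key (by norm_num : (0:ℝ) ≤ 1 / 2)
  unfold lpS
  refine key2.trans_eq ?_
  rw [Real.mul_rpow (Real.rpow_nonneg (n _) _) (Real.rpow_nonneg (n _) _),
    ← Real.rpow_mul (n _), ← Real.rpow_mul (n _), ← Real.rpow_mul (n _), ← Real.rpow_mul (n _)]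
  congr 2
  · field_simp
    norm_num
  · field_simp
    norm_num

theorem J6_estimate_ii (R s t : ℝ) (hR : 0 < R) (hs : 3 * R / 2 ≤ s) (hst : s < t)
    (ht : t ≤ 2 * R) (v : EuclideanSpace ℝ (Fin 3) → EuclideanSpace ℝ (Fin 3))
    (θ : EuclideanSpace ℝ (Fin 3) → ℝ)
    (hv : ContDiff ℝ (⊤ : ℕ∞) v) (hθ : ContDiff ℝ (⊤ : ℕ∞) θ)
    (q r : ℝ) (hq1 : 1 ≤ q) (hq2 : q < 2) (hr1 : 1 ≤ r) (hr2 : r < 2) :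
    (1 / (t - s)) * (∫ x in ball (0 : EuclideanSpace ℝ (Fin 3)) t \ ball 0 s,
        ‖v x‖ * |θ x|) ≤
      (1 / (t - s)) * lpS (fun x => ‖v x‖) q (ball 0 t \ ball 0 R) ^ (2 * q / (6 - q))
        * lpS θ r (ball 0 t \ ball 0 R) ^ (2 * r / (6 - r))
        * lpS (fun x => ‖v x‖) 6 (ball 0 t \ ball 0 R) ^ (3 * (2 - q) / (6 - q))
        * lpS θ 6 (ball 0 t \ ball 0 R) ^ (3 * (2 - r) / (6 - r)) := by
  have hcv : Continuous fun x => ‖v x‖ := hv.continuous.norm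
  have hcθ : Continuous θ := hθ.continuous
  have n (g : EuclideanSpace ℝ (Fin 3) → ℝ) (a : ℝ) : 0 ≤ lpS g a (ball 0 t \ ball 0 R) :=
    Real.rpow_nonneg (integral_nonneg fun x => by positivity) _
  have hts : 0 ≤ 1 / (t - s) := by
    have : 0 < t - s := by linarith
    positivity
  have h1 : (∫ x in ball (0 : EuclideanSpace ℝ (Fin 3)) t \ ball 0 s, ‖v x‖ * |θ x|) ≤
      ∫ x in ball (0 : EuclideanSpace ℝ (Fin 3)) t \ ball 0 R, ‖v x‖ * |θ x| := by
    refine setIntegral_mono_set ?_ (Filter.Eventually.of_forall fun x => by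
      simp only [Pi.zero_apply]; positivity) ?_
    · exact memLp_one_iff_integrable.mp (aux_memLp _ (hcv.mul hcθ.abs) t R 1)
    · exact HasSubset.Subset.eventuallyLE
        (Set.diff_subset_diff_right (ball_subset_ball (by linarith)))
  have h2 : (∫ x in ball (0 : EuclideanSpace ℝ (Fin 3)) t \ ball 0 R, ‖v x‖ * |θ x|) ≤
      lpS (fun x => ‖v x‖) 2 (ball 0 t \ ball 0 R) * lpS θ 2 (ball 0 t \ ball 0 R) := by
    have := integral_mul_le_Lp_mul_Lq_of_nonneg Real.HolderConjugate.two_two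
      (μ := volume.restrict (ball (0 : EuclideanSpace ℝ (Fin 3)) t \ ball 0 R))
      (f := fun x => ‖v x‖) (g := fun x => |θ x|)
      (Filter.Eventually.of_forall fun x => by positivity)
      (Filter.Eventually.of_forall fun x => by positivity)
      (aux_memLp _ hcv _ _ _) (aux_memLp _ hcθ.abs _ _ _)
    simpa only [lpS, abs_norm] using this
  have h3 := mul_le_mul (aux_interp _ hcv t R q hq1 hq2) (aux_interp _ hcθ t R r hr1 hr2)
    (n _ _) (mul_nonneg (Real.rpow_nonneg (n _ _) _) (Real.rpow_nonneg (n _ _) _))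
  refine (mul_le_mul_of_nonneg_left (h1.trans (h2.trans h3)) hts).trans_eq ?_
  ring
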